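/- arXiv:1311.0278 — 2 statements merged into one kernel-verified Lean document; each statement's English description precedes it below -/
import Mathlib

section
/- Let R = K[x_1][x_2; σ_2, δ_2] ⋯ [x_N; σ_N, δ_N] be an iterated Ore extension over a field K which is diagonalized, i.e., σ_k(x_j) = λ_{kj} x_j for scalars λ_{kj} ∈ K^× for all 1 ≤ j < k ≤ N (extended to a multiplicatively skew-symmetric matrix). Then R is reversible (admits an iterated Ore extension presentation with the variables in reverse order K[x_N][x_{N-1}; σ*_{N-1}, δ*_{N-1}] ⋯ [x_1; σ*_1, δ*_1] with σ*_j(x_k) = λ_{jk} x_k for j < k) if and only if δ_k(x_j) ∈ R_{[j+1,k-1]} for all 1 ≤ j < k ≤ N, where R_{[j,k]} denotes the unital subalgebra generated by x_j, …, x_k. -/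
/-! Write `S_j` for the subalgebra generated by the `x i` with `j < i` and `P_k` for the one
generated by the `x i` with `i < k`.

The relations of the given presentation, `δ_k(x_j) ∈ P_k`, let every element of `P_k` be rewritten
as a combination of ordered monomials in the variables before `x k`
(`adjoin_lt_le_span_ordered`). The relations `δ_k(x_j) ∈ S_j`, which follow from either side of the
equivalence, do the same for `S_j` and the variables after `x j` (`adjoin_ge_le_span_ordered`).

If `R` is reversible, then `δ_k(x_j)` lies in `P_k ∩ S_j`. Since the ordered monomials are linearly
independent, this intersection is spanned by the ordered monomials which involve only the variables
strictly between `x j` and `x k`, so `δ_k(x_j) ∈ R_{[j+1,k-1]}`.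

Conversely, the relations of the reversed presentation hold because `R_{[j+1,k-1]} ⊆ S_j`. That the
reversed monomials form a basis is a triangularity statement (`revMonomial_triangular`): modulo
ordered monomials with lexicographically smaller exponent, the reversed monomial with exponent `m`
is a nonzero scalar multiple of the ordered one with the same exponent. The lexicographic order on
`Fin N → ℕ` is a well-order, so the basis property carries over from the ordered monomials. -/

/-- The ordered monomial `x 0 ^ m 0 * x 1 ^ m 1 * ⋯ * x (N-1) ^ m (N-1)`. -/
def orderedMonomial {R : Type*} [Ring R] {N : ℕ} (x : Fin N → R) (m : Fin N → ℕ) : R :=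
  ((List.finRange N).map fun i => x i ^ m i).prod

/-- The reverse-ordered monomial `x (N-1) ^ m (N-1) * ⋯ * x 0 ^ m 0`. -/
def revMonomial {R : Type*} [Ring R] {N : ℕ} (x : Fin N → R) (m : Fin N → ℕ) : R :=
  (((List.finRange N).reverse).map fun i => x i ^ m i).prod

/-- `R` has the PBW property for the generators `x` : the ordered monomials form a
`K`-basis. -/
def IsPBW (K : Type*) {R : Type*} [Field K] [Ring R] [Algebra K R] {N : ℕ}
    (x : Fin N → R) : Prop :=
  LinearIndependent K (orderedMonomial x) ∧
    Submodule.span K (Set.range (orderedMonomial x)) = ⊤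

/-- The unital subalgebra `R_{[a,b]}` generated by the `x i` with `a ≤ i ≤ b`
(`0`-based indices, bounds taken in `ℤ`). -/
def genSub (K : Type*) {R : Type*} [Field K] [Ring R] [Algebra K R] {N : ℕ}
    (x : Fin N → R) (a b : ℤ) : Subalgebra K R :=
  Algebra.adjoin K {r | ∃ i : Fin N, a ≤ (i : ℤ) ∧ (i : ℤ) ≤ b ∧ r = x i}

/-- A diagonalized iterated Ore extension: PBW basis plus relations
`x k * x j = λ_{kj} x j x k + δ_k(x_j)` with `δ_k(x_j) ∈ R_{[1,k-1]}`. -/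
def IsDiagonalizedIOE (K : Type*) {R : Type*} [Field K] [Ring R] [Algebra K R] {N : ℕ}
    (x : Fin N → R) (lam : Fin N → Fin N → Kˣ) : Prop :=
  IsPBW K x ∧
    ∀ j k : Fin N, j < k →
      x k * x j - (lam k j : K) • (x j * x k) ∈ genSub K x 0 ((k : ℤ) - 1)

/-- Multiplicative skew-symmetry of the `λ`-matrix. -/
def MulSkewSymm {K : Type*} [Field K] {N : ℕ} (lam : Fin N → Fin N → Kˣ) : Prop :=
  (∀ i, lam i i = 1) ∧ ∀ i j, lam j i = (lam i j)⁻¹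

/-- Reversibility: a presentation with the variables in descending order, i.e. the
reversed monomials form a basis and `δ*_j(x_k) = x j x k - λ_{jk} x k x j` lies in the
subalgebra generated by `x (j+1), …, x (N-1)`. -/
def IsReversible (K : Type*) {R : Type*} [Field K] [Ring R] [Algebra K R] {N : ℕ}
    (x : Fin N → R) (lam : Fin N → Fin N → Kˣ) : Prop :=
  (LinearIndependent K (revMonomial x) ∧
      Submodule.span K (Set.range (revMonomial x)) = ⊤) ∧
    ∀ j k : Fin N, j < k →
      x j * x k - (lam j k : K) • (x k * x j) ∈ genSub K x ((j : ℤ) + 1) (N - 1)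

/-! ### Monomials and their first or last variable -/

section Monomials

variable {R : Type*} [Ring R] {N : ℕ}

lemma orderedMonomial_cons (x : Fin (N + 1) → R) (a : ℕ) (m : Fin N → ℕ) :
    orderedMonomial x (Fin.cons a m) = x 0 ^ a * orderedMonomial (fun i => x i.succ) m := by
  simp [orderedMonomial, List.finRange_succ, Function.comp_def]

lemma orderedMonomial_snoc (x : Fin (N + 1) → R) (m : Fin N → ℕ) (a : ℕ) :
    orderedMonomial x (Fin.snoc m a : Fin (N + 1) → ℕ) =
      orderedMonomial (fun i => x i.castSucc) m * x (Fin.last N) ^ a := by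
  simp [orderedMonomial, List.finRange_succ_last, Function.comp_def]

lemma revMonomial_cons (x : Fin (N + 1) → R) (a : ℕ) (m : Fin N → ℕ) :
    revMonomial x (Fin.cons a m) = revMonomial (fun i => x i.succ) m * x 0 ^ a := by
  simp [revMonomial, List.finRange_succ, Function.comp_def]

lemma toLex_cons_lt_of_lt {a b : ℕ} (h : a < b) (m m' : Fin N → ℕ) :
    toLex (Fin.cons a m : Fin (N + 1) → ℕ) < toLex (Fin.cons b m' : Fin (N + 1) → ℕ) :=
  (Fin.pi_lex_lt_cons_cons (α := fun _ => ℕ) (· < ·)).2 (Or.inl h)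

lemma toLex_cons_lt_of_tail_lt (a : ℕ) {m m' : Fin N → ℕ} (h : toLex m < toLex m') :
    toLex (Fin.cons a m : Fin (N + 1) → ℕ) < toLex (Fin.cons a m' : Fin (N + 1) → ℕ) :=
  (Fin.pi_lex_lt_cons_cons (α := fun _ => ℕ) (· < ·)).2 (Or.inr ⟨rfl, h⟩)

end Monomials

/-! ### Adjoining one variable

Here `B` denotes the subalgebra generated by `S`, to which the variable `t` is adjoined. -/

section OneVariable

variable {K R : Type*} [Field K] [Ring R] [Algebra K R]

/-- The elements `∑_{i < n} t ^ i * b_i` with coefficients `b_i` in `B`: polynomials in `t` of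
degree less than `n` with coefficients on the right. -/
def lowSpan (t : R) (B : Subalgebra K R) (n : ℕ) : Submodule K R :=
  Submodule.span K {r | ∃ i < n, ∃ b ∈ B, r = t ^ i * b}

lemma pow_mul_mem_lowSpan (t : R) (B : Subalgebra K R) {i n : ℕ} (hi : i < n) {b : R}
    (hb : b ∈ B) : t ^ i * b ∈ lowSpan t B n :=
  Submodule.subset_span ⟨i, hi, b, hb, rfl⟩

lemma lowSpan_mono (t : R) (B : Subalgebra K R) {n n' : ℕ} (h : n ≤ n') :
    lowSpan t B n ≤ lowSpan t B n' :=
  Submodule.span_mono fun _ ⟨i, hi, b, hb, e⟩ => ⟨i, hi.trans_le h, b, hb, e⟩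

lemma mul_mem_lowSpan (t : R) (B : Subalgebra K R) {n : ℕ} {r : R} (hr : r ∈ lowSpan t B n) :
    t * r ∈ lowSpan t B (n + 1) := by
  have : lowSpan t B n ≤ (lowSpan t B (n + 1)).comap (LinearMap.mulLeft K t) := by
    refine Submodule.span_le.2 ?_
    rintro _ ⟨i, hi, b, hb, rfl⟩
    simpa [pow_succ', mul_assoc] using
      pow_mul_mem_lowSpan t B (Nat.succ_lt_succ hi) hb
  exact this hr

/-- The commutation rule `B t ⊆ t B + B` extends from generators of `B` to all of `B`. -/
lemma exists_mul_sub_mem {S : Set R} {t : R}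
    (hS : ∀ s ∈ S, ∃ c : Kˣ, s * t - (c : K) • (t * s) ∈ Algebra.adjoin K S)
    {b : R} (hb : b ∈ Algebra.adjoin K S) :
    ∃ b₁ ∈ Algebra.adjoin K S, b * t - t * b₁ ∈ Algebra.adjoin K S := by
  induction hb using Algebra.adjoin_induction with
  | mem s hs =>
    obtain ⟨c, hc⟩ := hS s hs
    exact ⟨(c : K) • s, Subalgebra.smul_mem _ (Algebra.subset_adjoin hs) _, by simpa using hc⟩
  | algebraMap r =>
    refine ⟨algebraMap K R r, Subalgebra.algebraMap_mem _ r, ?_⟩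
    rw [Algebra.commutes, sub_self]
    exact Subalgebra.zero_mem _
  | add y z _ _ hy hz =>
    obtain ⟨y₁, hy₁, hy₂⟩ := hy
    obtain ⟨z₁, hz₁, hz₂⟩ := hz
    refine ⟨y₁ + z₁, add_mem hy₁ hz₁, ?_⟩
    convert add_mem hy₂ hz₂ using 1
    noncomm_ring
  | mul y z hyB _ hy hz =>
    obtain ⟨y₁, hy₁, hy₂⟩ := hy
    obtain ⟨z₁, hz₁, hz₂⟩ := hz
    refine ⟨y₁ * z₁, mul_mem hy₁ hz₁, ?_⟩
    convert add_mem (mul_mem hyB hz₂) (mul_mem hy₂ hz₁) using 1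
    noncomm_ring

lemma mul_pow_mem_lowSpan {S : Set R} {t : R}
    (hS : ∀ s ∈ S, ∃ c : Kˣ, s * t - (c : K) • (t * s) ∈ Algebra.adjoin K S)
    (n : ℕ) : ∀ b ∈ Algebra.adjoin K S, b * t ^ n ∈ lowSpan t (Algebra.adjoin K S) (n + 1) := by
  induction n with
  | zero =>
    intro b hb
    simpa using pow_mul_mem_lowSpan t (Algebra.adjoin K S) (Nat.zero_lt_one) hb
  | succ n ih =>
    intro b hb
    obtain ⟨b₁, hb₁, hb₂⟩ := exists_mul_sub_mem hS hb
    have e : b * t ^ (n + 1) = t * (b₁ * t ^ n) + (b * t - t * b₁) * t ^ n := by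
      rw [pow_succ']; noncomm_ring
    rw [e]
    exact add_mem (mul_mem_lowSpan t _ (ih _ hb₁)) (lowSpan_mono t _ (Nat.le_succ _) (ih _ hb₂))

/-- Adjoining `t` on the left of `B`: every element is a polynomial in `t` with coefficients in
`B` on the right. -/
lemma adjoin_insert_le_span_pow_mul {S : Set R} {t : R}
    (hS : ∀ s ∈ S, ∃ c : Kˣ, s * t - (c : K) • (t * s) ∈ Algebra.adjoin K S)
    {r : R} (hr : r ∈ Algebra.adjoin K (insert t S)) :
    r ∈ Submodule.span K {r | ∃ i : ℕ, ∃ b ∈ Algebra.adjoin K S, r = t ^ i * b} := by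
  set M := Submodule.span K {r | ∃ i : ℕ, ∃ b ∈ Algebra.adjoin K S, r = t ^ i * b}
  have hlow : ∀ n, lowSpan t (Algebra.adjoin K S) n ≤ M := fun n =>
    Submodule.span_mono fun _ ⟨i, _, b, hb, e⟩ => ⟨i, b, hb, e⟩
  -- `M` is stable under left multiplication by the whole algebra, and contains `1`.
  have key : ∀ m ∈ M, r * m ∈ M := by
    induction hr using Algebra.adjoin_induction with
    | mem s hs =>
      intro m hm
      have : M ≤ M.comap (LinearMap.mulLeft K s) := by
        refine Submodule.span_le.2 ?_
        rintro _ ⟨i, b, hb, rfl⟩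
        change s * (t ^ i * b) ∈ M
        rcases hs with rfl | hs
        · exact Submodule.subset_span ⟨i + 1, b, hb, by rw [pow_succ', mul_assoc]⟩
        · rw [← mul_assoc]
          have h1 := mul_pow_mem_lowSpan hS i s (Algebra.subset_adjoin hs)
          have : lowSpan t (Algebra.adjoin K S) (i + 1) ≤ M.comap (LinearMap.mulRight K b) := by
            refine Submodule.span_le.2 ?_
            rintro _ ⟨i, _, b', hb', rfl⟩
            exact Submodule.subset_span ⟨i, b' * b, mul_mem hb' hb, by simp [mul_assoc]⟩
          exact this h1
      exact this hm
    | algebraMap c =>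
      intro m hm
      rw [← Algebra.smul_def]
      exact M.smul_mem c hm
    | add y z _ _ hy hz =>
      intro m hm
      rw [add_mul]
      exact add_mem (hy m hm) (hz m hm)
    | mul y z _ _ hy hz =>
      intro m hm
      rw [mul_assoc]
      exact hy _ (hz m hm)
  have h1 : (1 : R) ∈ M := Submodule.subset_span ⟨0, 1, one_mem _, by simp⟩
  simpa using key 1 h1

/-- Adjoining `t` on the right of `B`: every element is a polynomial in `t` with coefficients in
`B` on the left. -/
lemma adjoin_insert_le_span_mul_pow {S : Set R} {t : R}
    (hS : ∀ s ∈ S, ∃ c : Kˣ, t * s - (c : K) • (s * t) ∈ Algebra.adjoin K S)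
    {r : R} (hr : r ∈ Algebra.adjoin K (insert t S)) :
    r ∈ Submodule.span K {r | ∃ i : ℕ, ∃ b ∈ Algebra.adjoin K S, r = b * t ^ i} := by
  -- In the opposite ring this is the left-hand version.
  have hop : ∀ T : Set R, ∀ r ∈ Algebra.adjoin K T,
      MulOpposite.op r ∈ Algebra.adjoin K (MulOpposite.op '' T) := by
    intro T r hr
    induction hr using Algebra.adjoin_induction with
    | mem s hs => exact Algebra.subset_adjoin ⟨s, hs, rfl⟩
    | algebraMap c => exact Subalgebra.algebraMap_mem _ c
    | add y z _ _ hy hz => exact add_mem hy hz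
    | mul y z _ _ hy hz => exact mul_mem hz hy
  have hunop : ∀ T : Set R, ∀ r ∈ Algebra.adjoin K (MulOpposite.op '' T),
      MulOpposite.unop r ∈ Algebra.adjoin K T := by
    intro T r hr
    induction hr using Algebra.adjoin_induction with
    | mem s hs =>
      obtain ⟨s, hs, rfl⟩ := hs
      exact Algebra.subset_adjoin hs
    | algebraMap c => exact Subalgebra.algebraMap_mem _ c
    | add y z _ _ hy hz => exact add_mem hy hz
    | mul y z _ _ hy hz => exact mul_mem hz hy
  have hS' : ∀ s ∈ MulOpposite.op '' S, ∃ c : Kˣ,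
      s * MulOpposite.op t - (c : K) • (MulOpposite.op t * s) ∈
        Algebra.adjoin K (MulOpposite.op '' S) := by
    rintro _ ⟨s, hs, rfl⟩
    obtain ⟨c, hc⟩ := hS s hs
    exact ⟨c, hop S _ hc⟩
  have h := hop _ r hr
  rw [Set.image_insert_eq] at h
  have h' := adjoin_insert_le_span_pow_mul hS' h
  have hle : Submodule.span K {r | ∃ i : ℕ, ∃ b ∈ Algebra.adjoin K (MulOpposite.op '' S),
      r = MulOpposite.op t ^ i * b} ≤
      (Submodule.span K {r | ∃ i : ℕ, ∃ b ∈ Algebra.adjoin K S, r = b * t ^ i}).comap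
        (MulOpposite.opLinearEquiv K).symm.toLinearMap := by
    refine Submodule.span_le.2 ?_
    rintro _ ⟨i, b, hb, rfl⟩
    exact Submodule.subset_span ⟨i, b.unop, hunop S b hb, by simp⟩
  exact hle h'

/-- If `b` commutes with `t` up to a unit and an error in `B`, then `b t ^ n` agrees with
`t ^ n b` up to a unit and terms of lower degree in `t`. -/
lemma exists_mul_pow_sub_mem_lowSpan {S : Set R} {t : R}
    (hS : ∀ s ∈ S, ∃ c : Kˣ, s * t - (c : K) • (t * s) ∈ Algebra.adjoin K S)
    {b : R} {c : Kˣ} (hb : b * t - (c : K) • (t * b) ∈ Algebra.adjoin K S) (n : ℕ) :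
    ∃ d : Kˣ, b * t ^ n - (d : K) • (t ^ n * b) ∈ lowSpan t (Algebra.adjoin K S) n := by
  induction n with
  | zero => exact ⟨1, by simp⟩
  | succ n ih =>
    obtain ⟨d, hd⟩ := ih
    refine ⟨c * d, ?_⟩
    have e : b * t ^ (n + 1) - ((c * d : Kˣ) : K) • (t ^ (n + 1) * b) =
        (b * t - (c : K) • (t * b)) * t ^ n +
          (c : K) • (t * (b * t ^ n - (d : K) • (t ^ n * b))) := by
      rw [pow_succ']
      simp only [Units.val_mul, mul_sub, sub_mul, smul_sub, mul_smul, smul_mul_assoc,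
        mul_smul_comm, mul_assoc]
      abel
    rw [e]
    exact add_mem (mul_pow_mem_lowSpan hS n _ hb)
      (Submodule.smul_mem _ _ (mul_mem_lowSpan t _ hd))

end OneVariable

/-! ### Ordered monomials span -/

section Spanning

variable {K R : Type*} [Field K] [Ring R] [Algebra K R]

/-- Relations `x_k x_j = c x_j x_k + (element generated by the variables after x_j)`. -/
def UpperRel (K : Type*) {R : Type*} [Field K] [Ring R] [Algebra K R] {N : ℕ}
    (x : Fin N → R) : Prop :=
  ∀ j k : Fin N, j < k → ∃ c : Kˣ,
    x k * x j - (c : K) • (x j * x k) ∈ Algebra.adjoin K (x '' {i | j < i})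

/-- Relations `x_k x_j = c x_j x_k + (element generated by the variables before x_k)`. -/
def LowerRel (K : Type*) {R : Type*} [Field K] [Ring R] [Algebra K R] {N : ℕ}
    (x : Fin N → R) : Prop :=
  ∀ j k : Fin N, j < k → ∃ c : Kˣ,
    x k * x j - (c : K) • (x j * x k) ∈ Algebra.adjoin K (x '' {i | i < k})

lemma UpperRel.tail {N : ℕ} {x : Fin (N + 1) → R} (h : UpperRel K x) :
    UpperRel K (fun i => x i.succ) := by
  intro j k hjk
  obtain ⟨c, hc⟩ := h j.succ k.succ (Fin.succ_lt_succ_iff.2 hjk)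
  refine ⟨c, Algebra.adjoin_mono ?_ hc⟩
  rintro _ ⟨i, hi, rfl⟩
  induction i using Fin.cases with
  | zero => exact absurd hi (Fin.not_lt_zero _)
  | succ i => exact ⟨i, Fin.succ_lt_succ_iff.1 hi, rfl⟩

lemma UpperRel.head {N : ℕ} {x : Fin (N + 1) → R} (h : UpperRel K x) :
    ∀ s ∈ Set.range (fun i : Fin N => x i.succ), ∃ c : Kˣ,
      s * x 0 - (c : K) • (x 0 * s) ∈
        Algebra.adjoin K (Set.range (fun i : Fin N => x i.succ)) := by
  rintro _ ⟨k, rfl⟩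
  obtain ⟨c, hc⟩ := h 0 k.succ (Fin.succ_pos k)
  refine ⟨c, Algebra.adjoin_mono ?_ hc⟩
  rintro _ ⟨i, hi, rfl⟩
  induction i using Fin.cases with
  | zero => exact absurd hi (lt_irrefl (_ : Fin (N + 1)))
  | succ i => exact ⟨i, rfl⟩

lemma LowerRel.dropLast {N : ℕ} {x : Fin (N + 1) → R} (h : LowerRel K x) :
    LowerRel K (fun i => x i.castSucc) := by
  intro j k hjk
  obtain ⟨c, hc⟩ := h j.castSucc k.castSucc (Fin.castSucc_lt_castSucc_iff.2 hjk)
  refine ⟨c, Algebra.adjoin_mono ?_ hc⟩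
  rintro _ ⟨i, hi, rfl⟩
  induction i using Fin.lastCases with
  | last => exact absurd hi (Fin.castSucc_lt_last k).not_gt
  | cast i => exact ⟨i, Fin.castSucc_lt_castSucc_iff.1 hi, rfl⟩

lemma LowerRel.last {N : ℕ} {x : Fin (N + 1) → R} (h : LowerRel K x) :
    ∀ s ∈ Set.range (fun i : Fin N => x i.castSucc), ∃ c : Kˣ,
      x (Fin.last N) * s - (c : K) • (s * x (Fin.last N)) ∈
        Algebra.adjoin K (Set.range (fun i : Fin N => x i.castSucc)) := by
  rintro _ ⟨j, rfl⟩
  obtain ⟨c, hc⟩ := h j.castSucc (Fin.last N) (Fin.castSucc_lt_last j)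
  refine ⟨c, Algebra.adjoin_mono ?_ hc⟩
  rintro _ ⟨i, hi, rfl⟩
  induction i using Fin.lastCases with
  | last => exact absurd hi (lt_irrefl (_ : Fin (N + 1)))
  | cast i => exact ⟨i, rfl⟩

lemma adjoin_empty_le_span_ordered {S : Set R} (hS : S = ∅) {N : ℕ} (x : Fin N → R)
    {P : Set (Fin N → ℕ)} (hP : 0 ∈ P) {r : R} (hr : r ∈ Algebra.adjoin K S) :
    r ∈ Submodule.span K (orderedMonomial x '' P) := by
  rw [hS, Algebra.adjoin_empty, Algebra.mem_bot] at hr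
  obtain ⟨c, rfl⟩ := hr
  rw [Algebra.algebraMap_eq_smul_one]
  exact Submodule.smul_mem _ _ (Submodule.subset_span ⟨0, hP, by simp [orderedMonomial]⟩)

/-- The variables are adjoined from the last to the first; the induction on `N` removes `x 0`. -/
lemma adjoin_ge_le_span_ordered {N : ℕ} : ∀ {x : Fin N → R}, UpperRel K x → ∀ (l : ℕ) {r : R},
    r ∈ Algebra.adjoin K (x '' {i | l ≤ i}) →
      r ∈ Submodule.span K (orderedMonomial x '' {m | ∀ i : Fin N, (i : ℕ) < l → m i = 0}) := by
  induction N with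
  | zero =>
    intro x _ l r hr
    exact adjoin_empty_le_span_ordered (by simp [Set.eq_empty_of_isEmpty]) x (fun i => i.elim0) hr
  | succ N ih =>
    intro x h l r hr
    -- Multiplying by a power of `x 0` shifts the exponents of the remaining variables.
    have shift : ∀ (a l' : ℕ), (a = 0 ∨ l = 0) → l ≤ l' + 1 →
        ∀ b ∈ Algebra.adjoin K ((fun i : Fin N => x i.succ) '' {i | l' ≤ i}),
        x 0 ^ a * b ∈ Submodule.span K
          (orderedMonomial x '' {m | ∀ i : Fin (N + 1), (i : ℕ) < l → m i = 0}) := by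
      intro a l' ha hl b hb
      have hle : Submodule.span K (orderedMonomial (fun i : Fin N => x i.succ) ''
            {m | ∀ i : Fin N, (i : ℕ) < l' → m i = 0}) ≤
          (Submodule.span K (orderedMonomial x ''
            {m | ∀ i : Fin (N + 1), (i : ℕ) < l → m i = 0})).comap
            (LinearMap.mulLeft K (x 0 ^ a)) := by
        refine Submodule.span_le.2 ?_
        rintro _ ⟨m, hm, rfl⟩
        refine Submodule.subset_span ⟨Fin.cons a m, ?_, orderedMonomial_cons x a m⟩
        intro i hi
        induction i using Fin.cases with
        | zero =>
          rcases ha with rfl | rfl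
          · rfl
          · exact absurd hi (Nat.not_lt_zero _)
        | succ i =>
          rw [Fin.cons_succ]
          refine hm i ?_
          rw [Fin.val_succ] at hi
          omega
      exact hle (ih h.tail l' hb)
    rcases l with _ | l
    · have hset : x '' {i | 0 ≤ (i : ℕ)} = insert (x 0) (Set.range fun i : Fin N => x i.succ) := by
        ext r
        simp [Fin.exists_fin_succ, eq_comm]
      rw [hset] at hr
      refine Submodule.span_le.2 ?_ (adjoin_insert_le_span_pow_mul h.head hr)
      rintro _ ⟨a, b, hb, rfl⟩
      exact shift a 0 (Or.inr rfl) (Nat.zero_le _) b (by simpa using hb)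
    · have hset : x '' {i | l + 1 ≤ (i : ℕ)} = (fun i : Fin N => x i.succ) '' {i | l ≤ i} := by
        ext r
        simp [Fin.exists_fin_succ]
      rw [hset] at hr
      simpa using shift 0 l (Or.inl rfl) le_rfl r hr

/-- The variables are adjoined in their given order; the induction on `N` removes the last one. -/
lemma adjoin_lt_le_span_ordered {N : ℕ} : ∀ {x : Fin N → R}, LowerRel K x → ∀ (l : ℕ) {r : R},
    r ∈ Algebra.adjoin K (x '' {i | i < l}) →
      r ∈ Submodule.span K (orderedMonomial x '' {m | ∀ i : Fin N, l ≤ (i : ℕ) → m i = 0}) := by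
  induction N with
  | zero =>
    intro x _ l r hr
    exact adjoin_empty_le_span_ordered (by simp [Set.eq_empty_of_isEmpty]) x (fun i => i.elim0) hr
  | succ N ih =>
    intro x h l r hr
    have shift : ∀ a : ℕ, (a = 0 ∨ N < l) →
        ∀ b ∈ Algebra.adjoin K ((fun i : Fin N => x i.castSucc) '' {i | i < l}),
        b * x (Fin.last N) ^ a ∈ Submodule.span K
          (orderedMonomial x '' {m | ∀ i : Fin (N + 1), l ≤ (i : ℕ) → m i = 0}) := by
      intro a ha b hb
      have hle : Submodule.span K (orderedMonomial (fun i : Fin N => x i.castSucc) ''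
            {m | ∀ i : Fin N, l ≤ (i : ℕ) → m i = 0}) ≤
          (Submodule.span K (orderedMonomial x ''
            {m | ∀ i : Fin (N + 1), l ≤ (i : ℕ) → m i = 0})).comap
            (LinearMap.mulRight K (x (Fin.last N) ^ a)) := by
        refine Submodule.span_le.2 ?_
        rintro _ ⟨m, hm, rfl⟩
        refine Submodule.subset_span ⟨Fin.snoc m a, ?_, orderedMonomial_snoc x m a⟩
        intro i hi
        induction i using Fin.lastCases with
        | last =>
          rcases ha with rfl | ha
          · simp
          · exact absurd hi (by simpa using ha)
        | cast i => simpa using hm i hi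
      exact hle (ih h.dropLast l hb)
    by_cases hl : N < l
    · have hset : x '' {i | (i : ℕ) < l} =
          insert (x (Fin.last N)) (Set.range fun i : Fin N => x i.castSucc) := by
        ext r
        simp only [Set.mem_image, Set.mem_ofPred_eq, Set.mem_insert_iff, Set.mem_range]
        constructor
        · rintro ⟨i, _, rfl⟩
          induction i using Fin.lastCases with
          | last => exact Or.inl rfl
          | cast i => exact Or.inr ⟨i, rfl⟩
        · rintro (rfl | ⟨i, rfl⟩)
          · exact ⟨_, hl, rfl⟩
          · exact ⟨_, i.2.trans hl, rfl⟩
      have hset' : {i : Fin N | (i : ℕ) < l} = Set.univ :=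
        Set.eq_univ_of_forall fun i => i.2.trans hl
      rw [hset', Set.image_univ] at shift
      rw [hset] at hr
      refine Submodule.span_le.2 ?_ (adjoin_insert_le_span_mul_pow h.last hr)
      rintro _ ⟨a, b, hb, rfl⟩
      exact shift a (Or.inr hl) b hb
    · have hset : x '' {i | (i : ℕ) < l} ⊆ (fun i : Fin N => x i.castSucc) '' {i | i < l} := by
        rintro _ ⟨i, hi, rfl⟩
        induction i using Fin.lastCases with
        | last => exact absurd hi hl
        | cast i => exact ⟨i, hi, rfl⟩
      simpa using shift 0 (Or.inl rfl) r (Algebra.adjoin_mono hset hr)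

lemma orderedMonomial_mem_adjoin {N : ℕ} (x : Fin N → R) {S : Set (Fin N)} {m : Fin N → ℕ}
    (hm : ∀ i, i ∉ S → m i = 0) : orderedMonomial x m ∈ Algebra.adjoin K (x '' S) := by
  refine Subalgebra.list_prod_mem _ ?_
  intro r hr
  obtain ⟨i, _, rfl⟩ := List.mem_map.1 hr
  by_cases hi : i ∈ S
  · exact Subalgebra.pow_mem _ (Algebra.subset_adjoin (Set.mem_image_of_mem x hi)) _
  · rw [hm i hi, pow_zero]
    exact Subalgebra.one_mem _

/-- For a linearly independent family, the span of the members indexed by an intersection is the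
intersection of the spans. -/
lemma mem_span_image_inter {ι M : Type*} [AddCommGroup M] [Module K M] {v : ι → M}
    (hv : LinearIndependent K v) {s t : Set ι} {r : M} (hs : r ∈ Submodule.span K (v '' s))
    (ht : r ∈ Submodule.span K (v '' t)) : r ∈ Submodule.span K (v '' (s ∩ t)) := by
  rw [Finsupp.mem_span_image_iff_linearCombination] at *
  obtain ⟨f, hf, rfl⟩ := hs
  obtain ⟨g, hg, hfg⟩ := ht
  obtain rfl : g = f := hv hfg
  refine ⟨g, ?_, rfl⟩
  rw [Finsupp.supported_inter]
  exact ⟨hf, hg⟩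

end Spanning

/-! ### Triangularity of the reversed monomials -/

section Triangular

variable {K R : Type*} [Field K] [Ring R] [Algebra K R]

lemma exists_list_prod_mul_sub_mem {S : Set R} {t : R}
    (hS : ∀ s ∈ S, ∃ c : Kˣ, s * t - (c : K) • (t * s) ∈ Algebra.adjoin K S)
    (L : List R) (hL : ∀ s ∈ L, ∃ s' ∈ S, ∃ n : ℕ, s = s' ^ n) :
    L.prod ∈ Algebra.adjoin K S ∧
      ∃ c : Kˣ, L.prod * t - (c : K) • (t * L.prod) ∈ Algebra.adjoin K S := by
  -- Elements commuting with `t` up to a unit and an error in `B` are closed under products.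
  have hmul : ∀ y ∈ Algebra.adjoin K S, ∀ z ∈ Algebra.adjoin K S, ∀ c d : Kˣ,
      y * t - (c : K) • (t * y) ∈ Algebra.adjoin K S →
      z * t - (d : K) • (t * z) ∈ Algebra.adjoin K S →
      y * z * t - ((d * c : Kˣ) : K) • (t * (y * z)) ∈ Algebra.adjoin K S := by
    intro y hy z hz c d hc hd
    have e : y * z * t - ((d * c : Kˣ) : K) • (t * (y * z)) =
        y * (z * t - (d : K) • (t * z)) + (d : K) • ((y * t - (c : K) • (t * y)) * z) := by
      simp only [Units.val_mul, mul_sub, sub_mul, smul_sub, mul_smul, smul_mul_assoc,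
        mul_smul_comm, mul_assoc]
      abel
    rw [e]
    exact add_mem (mul_mem hy hd) (Subalgebra.smul_mem _ (mul_mem hc hz) _)
  have hpow : ∀ s ∈ S, ∀ n : ℕ, s ^ n ∈ Algebra.adjoin K S ∧
      ∃ c : Kˣ, s ^ n * t - (c : K) • (t * s ^ n) ∈ Algebra.adjoin K S := by
    intro s hs n
    induction n with
    | zero => exact ⟨by simp, 1, by simp⟩
    | succ n ih =>
      obtain ⟨h1, c, hc⟩ := ih
      obtain ⟨d, hd⟩ := hS s hs
      have hsB : s ∈ Algebra.adjoin K S := Algebra.subset_adjoin hs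
      rw [pow_succ]
      exact ⟨mul_mem h1 hsB, _, hmul _ h1 _ hsB _ _ hc hd⟩
  induction L with
  | nil => exact ⟨by simp, 1, by simp⟩
  | cons s L ih =>
    obtain ⟨h1, c, hc⟩ := ih fun s hs => hL s (List.mem_cons_of_mem _ hs)
    obtain ⟨s', hs', n, rfl⟩ := hL s List.mem_cons_self
    obtain ⟨h2, d, hd⟩ := hpow s' hs' n
    rw [List.prod_cons]
    exact ⟨mul_mem h2 h1, _, hmul _ h2 _ h1 _ _ hd hc⟩

/-- The first variable has the most significant exponent in the lexicographic order, so errors of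
lower degree in `x 0` are lexicographically smaller whatever their other exponents are. -/
lemma revMonomial_triangular {N : ℕ} : ∀ {x : Fin N → R}, UpperRel K x → ∀ m : Fin N → ℕ,
    ∃ c : Kˣ, revMonomial x m - (c : K) • orderedMonomial x m ∈
      Submodule.span K (orderedMonomial x '' {m' | toLex m' < toLex m}) := by
  induction N with
  | zero => intro x _ m; exact ⟨1, by simp [revMonomial, orderedMonomial]⟩
  | succ N ih =>
    intro x h m
    obtain ⟨a, m, rfl⟩ : ∃ a m', m = Fin.cons a m' := ⟨m 0, Fin.tail m, (Fin.cons_self_tail m).symm⟩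
    set y : Fin N → R := fun i => x i.succ with hy
    set b := revMonomial y m with hb
    obtain ⟨c, hc⟩ := ih h.tail m
    obtain ⟨_, d, hd⟩ := exists_list_prod_mul_sub_mem h.head
      ((List.finRange N).reverse.map fun i => y i ^ m i) (by
        intro s hs
        obtain ⟨i, _, rfl⟩ := List.mem_map.1 hs
        exact ⟨y i, ⟨i, rfl⟩, m i, rfl⟩)
    obtain ⟨e, he⟩ := exists_mul_pow_sub_mem_lowSpan h.head (b := b) hd a
    refine ⟨e * c, ?_⟩
    have hsplit : revMonomial x (Fin.cons a m) -
        ((e * c : Kˣ) : K) • orderedMonomial x (Fin.cons a m) =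
        (b * x 0 ^ a - (e : K) • (x 0 ^ a * b)) +
          (e : K) • (x 0 ^ a * (b - (c : K) • orderedMonomial y m)) := by
      rw [revMonomial_cons, orderedMonomial_cons]
      simp only [Units.val_mul, mul_sub, smul_sub, mul_smul, mul_smul_comm]
      abel
    rw [hsplit]
    refine add_mem ?_ (Submodule.smul_mem _ _ ?_)
    · refine Submodule.span_le.2 ?_ he
      rintro _ ⟨i, hi, r, hr, rfl⟩
      have hr' := adjoin_ge_le_span_ordered h.tail 0 (r := r) (by simpa using hr)
      have hle : Submodule.span K (orderedMonomial y '' {m | ∀ i : Fin N, (i : ℕ) < 0 → m i = 0}) ≤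
          (Submodule.span K (orderedMonomial x '' {m' | toLex m' <
            toLex (Fin.cons a m : Fin (N + 1) → ℕ)})).comap (LinearMap.mulLeft K (x 0 ^ i)) := by
        refine Submodule.span_le.2 ?_
        rintro _ ⟨m', _, rfl⟩
        exact Submodule.subset_span
          ⟨Fin.cons i m', toLex_cons_lt_of_lt hi m' m, orderedMonomial_cons x i m'⟩
      exact hle hr'
    · have hle : Submodule.span K (orderedMonomial y '' {m' | toLex m' < toLex m}) ≤
          (Submodule.span K (orderedMonomial x '' {m' | toLex m' <
            toLex (Fin.cons a m : Fin (N + 1) → ℕ)})).comap (LinearMap.mulLeft K (x 0 ^ a)) := by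
        refine Submodule.span_le.2 ?_
        rintro _ ⟨m', hm', rfl⟩
        exact Submodule.subset_span
          ⟨Fin.cons a m', toLex_cons_lt_of_tail_lt a hm', orderedMonomial_cons x a m'⟩
      exact hle hc

/-- A family which is triangular, with unit diagonal, with respect to a linearly independent family
is linearly independent. -/
lemma linearIndependent_of_triangular {ι M : Type*} [LinearOrder ι] [AddCommGroup M] [Module K M]
    {v w : ι → M} (hv : LinearIndependent K v)
    (hw : ∀ i, ∃ c : Kˣ, w i - (c : K) • v i ∈ Submodule.span K (v '' {j | j < i})) :
    LinearIndependent K w := by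
  rw [linearIndependent_iff]
  intro f hf
  by_contra hne
  -- The largest index in a nontrivial relation would exhibit its `v`-vector as a combination of
  -- smaller ones.
  have hs : f.support.Nonempty := Finsupp.support_nonempty_iff.2 hne
  set i := f.support.max' hs
  have his : i ∈ f.support := Finset.max'_mem _ _
  have hfi : f i ≠ 0 := Finsupp.mem_support_iff.1 his
  have hlow : ∀ j ∈ f.support.erase i, f j • w j ∈ Submodule.span K (v '' {j | j < i}) := by
    intro j hj
    have hji : j < i := lt_of_le_of_ne (Finset.le_max' _ _ (Finset.mem_of_mem_erase hj))
      (Finset.ne_of_mem_erase hj)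
    obtain ⟨c, hc⟩ := hw j
    refine Submodule.smul_mem _ _ ?_
    rw [← sub_add_cancel (w j) ((c : K) • v j)]
    refine add_mem (Submodule.span_mono (Set.image_mono ?_) hc)
      (Submodule.smul_mem _ _ (Submodule.subset_span ⟨j, hji, rfl⟩))
    intro k hk
    exact lt_trans hk hji
  obtain ⟨c, hc⟩ := hw i
  have hsum : f i • w i + ∑ j ∈ f.support.erase i, f j • w j = 0 := by
    rw [Finset.add_sum_erase _ (fun j => f j • w j) his]
    exact hf
  have h1 : f i • w i ∈ Submodule.span K (v '' {j | j < i}) := by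
    rw [eq_neg_of_add_eq_zero_left hsum]
    exact Submodule.neg_mem _ (Submodule.sum_mem _ hlow)
  have h2 : w i ∈ Submodule.span K (v '' {j | j < i}) := (Submodule.smul_mem_iff _ hfi).1 h1
  have h3 : (c : K) • v i ∈ Submodule.span K (v '' {j | j < i}) := by
    simpa using Submodule.sub_mem _ h2 hc
  exact hv.notMem_span_image (s := {j | j < i}) (lt_irrefl i) ((Submodule.smul_mem_iff _ c.ne_zero).1 h3)

lemma mem_span_of_triangular {ι M : Type*} [LinearOrder ι] [WellFoundedLT ι] [AddCommGroup M]
    [Module K M] {v w : ι → M}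
    (hw : ∀ i, ∃ c : Kˣ, w i - (c : K) • v i ∈ Submodule.span K (v '' {j | j < i})) (i : ι) :
    v i ∈ Submodule.span K (Set.range w) := by
  induction i using WellFoundedLT.induction with
  | ind i ih =>
    obtain ⟨c, hc⟩ := hw i
    have h1 : w i - (c : K) • v i ∈ Submodule.span K (Set.range w) := by
      refine Submodule.span_le.2 ?_ hc
      rintro _ ⟨j, hj, rfl⟩
      exact ih j hj
    have h2 : (c : K) • v i ∈ Submodule.span K (Set.range w) := by
      simpa using Submodule.sub_mem _ (Submodule.subset_span (Set.mem_range_self i)) h1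
    exact (Submodule.smul_mem_iff _ c.ne_zero).1 h2

lemma revMonomial_basis {N : ℕ} {x : Fin N → R} (hx : IsPBW K x) (h : UpperRel K x) :
    LinearIndependent K (revMonomial x) ∧
      Submodule.span K (Set.range (revMonomial x)) = ⊤ := by
  -- The same families, indexed by exponents carrying the lexicographic order.
  let v : Lex (Fin N → ℕ) → R := fun m => orderedMonomial x (ofLex m)
  let w : Lex (Fin N → ℕ) → R := fun m => revMonomial x (ofLex m)
  have hw : ∀ m, ∃ c : Kˣ, w m - (c : K) • v m ∈ Submodule.span K (v '' {j | j < m}) :=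
    fun m => revMonomial_triangular h (ofLex m)
  have hv : LinearIndependent K v := hx.1.comp _ ofLex.injective
  refine ⟨(linearIndependent_of_triangular hv hw).comp _ toLex.injective, ?_⟩
  rw [eq_top_iff, ← hx.2]
  refine Submodule.span_le.2 ?_
  rintro _ ⟨m, rfl⟩
  refine Submodule.span_mono ?_ (mem_span_of_triangular hw (toLex m))
  rintro _ ⟨m', rfl⟩
  exact ⟨ofLex m', rfl⟩

end Triangular

/-! ### The equivalence -/

lemma genSub_eq_adjoin_image (K : Type*) {R : Type*} [Field K] [Ring R] [Algebra K R] {N : ℕ}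
    (x : Fin N → R) (a b : ℤ) :
    genSub K x a b = Algebra.adjoin K (x '' {i : Fin N | a ≤ (i : ℤ) ∧ (i : ℤ) ≤ b}) := by
  unfold genSub
  congr 1
  ext r
  simp [and_assoc, eq_comm]

/-- Solving `x_k x_j = λ_{kj} x_j x_k + δ` for `x_j x_k` rescales the remainder by a unit. -/
lemma rel_reverse {K R : Type*} [Field K] [Ring R] [Algebra K R] (A : Subalgebra K R)
    {c d : Kˣ} (hcd : d = c⁻¹) {y z : R} (h : y * z - (c : K) • (z * y) ∈ A) :
    z * y - (d : K) • (y * z) ∈ A := by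
  have e : z * y - (d : K) • (y * z) = -((d : K) • (y * z - (c : K) • (z * y))) := by
    rw [smul_sub, smul_smul, hcd, Units.inv_mul, one_smul, neg_sub]
  rw [e]
  exact neg_mem (Subalgebra.smul_mem _ h _)

/-- A diagonalized iterated Ore extension is reversible iff
`δ_k(x_j) ∈ R_{[j+1,k-1]}` for all `j < k`. -/
theorem reversible_iff_delta_mem {K R : Type*} [Field K] [Ring R] [Algebra K R] {N : ℕ}
    (x : Fin N → R) (lam : Fin N → Fin N → Kˣ)
    (hdiag : IsDiagonalizedIOE K x lam) (hskew : MulSkewSymm lam) :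
    IsReversible K x lam ↔
      ∀ j k : Fin N, j < k →
        x k * x j - (lam k j : K) • (x j * x k) ∈
          genSub K x ((j : ℤ) + 1) ((k : ℤ) - 1) := by
  obtain ⟨hpbw, hrel⟩ := hdiag
  constructor
  · rintro ⟨-, hrev⟩ j k hjk
    have hmono : ∀ (S T : Set (Fin N)), S ⊆ T → ∀ r ∈ Algebra.adjoin K (x '' S),
        r ∈ Algebra.adjoin K (x '' T) :=
      fun S T hST r hr => Algebra.adjoin_mono (Set.image_mono hST) hr
    have hlow : ∀ j k : Fin N, j < k → x k * x j - (lam k j : K) • (x j * x k) ∈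
        Algebra.adjoin K (x '' {i | i < k}) := by
      intro j k hjk
      have h := hrel j k hjk
      rw [genSub_eq_adjoin_image] at h
      refine hmono _ _ ?_ _ h
      rintro i ⟨_, hi⟩
      simp only [Set.mem_ofPred_eq, Fin.lt_def]
      omega
    have hup : ∀ j k : Fin N, j < k → x k * x j - (lam k j : K) • (x j * x k) ∈
        Algebra.adjoin K (x '' {i | j < i}) := by
      intro j k hjk
      have h := rel_reverse _ (hskew.2 j k) (hrev j k hjk)
      rw [genSub_eq_adjoin_image] at h
      refine hmono _ _ ?_ _ h
      rintro i ⟨hi, _⟩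
      simp only [Set.mem_ofPred_eq, Fin.lt_def]
      omega
    have h1 := adjoin_lt_le_span_ordered (fun j k hjk => ⟨_, hlow j k hjk⟩) k (hlow j k hjk)
    have h2 := adjoin_ge_le_span_ordered (fun j k hjk => ⟨_, hup j k hjk⟩) (j + 1) (hup j k hjk)
    rw [genSub_eq_adjoin_image]
    refine (Submodule.span_le (p := Subalgebra.toSubmodule (Algebra.adjoin K
      (x '' {i : Fin N | (j : ℤ) + 1 ≤ (i : ℤ) ∧ (i : ℤ) ≤ (k : ℤ) - 1})))).2 ?_
      (mem_span_image_inter hpbw.1 h1 h2)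
    rintro _ ⟨m, ⟨hm1, hm2⟩, rfl⟩
    refine orderedMonomial_mem_adjoin x fun i hi => ?_
    by_cases hki : (k : ℕ) ≤ i
    · exact hm1 i hki
    · refine hm2 i ?_
      simp only [Set.mem_ofPred_eq] at hi
      omega
  · intro h
    refine ⟨revMonomial_basis hpbw fun j k hjk => ⟨lam k j, ?_⟩, fun j k hjk => ?_⟩
    · have h' := h j k hjk
      rw [genSub_eq_adjoin_image] at h'
      refine Algebra.adjoin_mono (Set.image_mono ?_) h'
      rintro i ⟨hi, _⟩
      simp only [Set.mem_ofPred_eq, Fin.lt_def]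
      omega
    · have h' := rel_reverse _ (hskew.2 k j) (h j k hjk)
      rw [genSub_eq_adjoin_image] at h' ⊢
      refine Algebra.adjoin_mono (Set.image_mono ?_) h'
      rintro i ⟨hi, _⟩
      refine ⟨hi, ?_⟩
      have := i.2
      omega
end

section
/- Let R = O_q(M_{t,n}(K)) with t, n ≥ 2 and q ∈ K^× not a root of unity, and let R̄ = R/[R,R] be the abelianization, where [R,R] is the two-sided ideal generated by all commutators. Denote by X̄_{ij} the images of the generators. Then: (1) X̄_{ij} X̄_{lm} = 0 whenever (i = l and j ≠ m), or (i ≠ l and j = m), or (i < l and j > m); (2) the elements X̄_{ij}^2 together with the products X̄_{ij} X̄_{lm} for i < l and j < m form a K-basis of the degree-2 component of R̄. -/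
/-!
Part (1) is immediate: in the commutative quotient the row and column relations read
`(q - 1) x y = 0`, and the last relation reads `0 = (q - q⁻¹) x y`. With it, spanning in (2)
is clear.

For linear independence it suffices to have enough characters `R → K`: the one sending `X i j`
to `1` at a single position `p` and to `0` elsewhere isolates the coefficient of the square of
`X p`, and the one supported on two positions, one strictly south-east of the other, then
isolates the coefficient of their product. Both supports are compatible with the relations.

That a family obeying the relations defines a character rests on the basis of ordered monomials
(`QRel.exists_algHom`). In any algebra, the relations rewrite every word as a combination of
ordered monomials (`QRel.straighten`). Applied in `R × K` to the pairs `(X i j, y i j)`, this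
shows that the subalgebra they generate is the graph of a map: an element `(0, b)` of it is a
combination of ordered monomials in the pairs, and independence of the ordered monomials in the
`X i j` makes all coefficients vanish.
-/

/-- The lexicographically ordered monomial in the generators `X i j`. -/
def qMatMonomial {R : Type*} [Ring R] {t n : ℕ}
    (X : Fin t → Fin n → R) (m : Fin t × Fin n → ℕ) : R :=
  ((List.finRange t).map fun i =>
    (((List.finRange n).map fun j => X i j ^ m (i, j)).prod)).prod

/-- The relation whose `RingQuot` is the abelianization `R/[R,R]`. -/
def commRel (R : Type*) [Ring R] : R → R → Prop :=
  fun u v => ∃ a b : R, u = a * b ∧ v = b * a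

/-! ### Words in the generators -/

/-- Position of a generator in the row-by-row enumeration of the matrix entries. -/
def qEnc {t n : ℕ} (p : Fin t × Fin n) : ℕ := p.1 * n + p.2

/-- The (reflexive) lexicographic order on matrix positions, as a bare relation. -/
def qLe {t n : ℕ} (p r : Fin t × Fin n) : Prop := p.1 < r.1 ∨ (p.1 = r.1 ∧ p.2 ≤ r.2)

/-- Termination measure of the straightening: the sum of the positions of the letters, each
weighted by the number of letters from it to the end of the word. Moving weight to the right
lowers it. -/
def qMeas {t n : ℕ} : List (Fin t × Fin n) → ℕ
  | [] => 0
  | x :: w => (w.length + 1) * qEnc x + qMeas w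

lemma qEnc_lt {t n : ℕ} {a b : Fin t × Fin n} (h : a.1 < b.1) : qEnc a < qEnc b := by
  unfold qEnc
  have h1 : (a.1 : ℕ) + 1 ≤ b.1 := h
  have h2 := a.2.isLt
  nlinarith [Nat.mul_le_mul_right n h1]

lemma qMeas_lt {t n : ℕ} (u v : List (Fin t × Fin n)) {a b c d : Fin t × Fin n}
    (h : qEnc c < qEnc b) (hs : qEnc a + qEnc b = qEnc c + qEnc d) :
    qMeas (u ++ c :: d :: v) < qMeas (u ++ b :: a :: v) := by
  induction u with
  | nil =>
    simp only [List.nil_append, qMeas, List.length_cons]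
    nlinarith
  | cons x u ih =>
    simp only [List.cons_append, qMeas, List.length_append, List.length_cons]
    omega

/-- The sorted word with `m p` letters `p`. -/
def qWord {t n : ℕ} (m : Fin t × Fin n → ℕ) : List (Fin t × Fin n) :=
  (List.finRange t).flatMap fun i =>
    (List.finRange n).flatMap fun j => List.replicate (m (i, j)) (i, j)

lemma qWord_prod {P : Type*} [Ring P] {t n : ℕ} (Z : Fin t → Fin n → P)
    (m : Fin t × Fin n → ℕ) :
    ((qWord m).map fun p => Z p.1 p.2).prod = qMatMonomial Z m := by
  simp [qWord, qMatMonomial, List.flatMap, List.prod_flatten,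
    Function.comp_def]

lemma qWord_pairwise {t n : ℕ} (m : Fin t × Fin n → ℕ) : (qWord m).Pairwise qLe := by
  unfold qWord
  rw [List.pairwise_flatMap]
  refine ⟨fun i _ => ?_, ?_⟩
  · rw [List.pairwise_flatMap]
    refine ⟨fun j _ => ?_, ?_⟩
    · rw [List.pairwise_replicate]
      exact Or.inr (Or.inr ⟨rfl, le_rfl⟩)
    · refine (List.pairwise_lt_finRange n).imp ?_
      intro j k hjk x hx y hy
      rw [List.eq_of_mem_replicate hx, List.eq_of_mem_replicate hy]
      exact Or.inr ⟨rfl, hjk.le⟩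
  · refine (List.pairwise_lt_finRange t).imp ?_
    intro i k hik x hx y hy
    simp only [List.mem_flatMap] at hx hy
    obtain ⟨_, _, hx⟩ := hx
    obtain ⟨_, _, hy⟩ := hy
    rw [List.eq_of_mem_replicate hx, List.eq_of_mem_replicate hy]
    exact Or.inl hik

lemma qWord_count {t n : ℕ} (m : Fin t × Fin n → ℕ) (p : Fin t × Fin n) :
    (qWord m).count p = m p := by
  obtain ⟨i, j⟩ := p
  have hsum : ∀ (k : ℕ) (f : Fin k → ℕ), ((List.finRange k).map f).sum = ∑ x, f x := by
    intro k f
    rw [← List.ofFn_eq_map, List.sum_ofFn]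
  unfold qWord
  simp only [List.count_flatMap, Function.comp_def, List.count_replicate, hsum]
  rw [Finset.sum_eq_single i, Finset.sum_eq_single j]
  all_goals simp +contextual [Prod.ext_iff]

/-- A sorted word is determined by its letter multiplicities, so its value is an ordered
monomial. -/
lemma sorted_prod {P : Type*} [Ring P] {t n : ℕ} (Z : Fin t → Fin n → P)
    (w : List (Fin t × Fin n)) (hw : w.Pairwise qLe) :
    (w.map fun p => Z p.1 p.2).prod = qMatMonomial Z (fun p => w.count p) := by
  rw [← qWord_prod]
  congr 2
  refine List.Perm.eq_of_pairwise (le := qLe) ?_ hw (qWord_pairwise _) ?_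
  · rintro ⟨a, b⟩ ⟨c, d⟩ _ _ h1 h2
    simp only [qLe] at h1 h2
    ext <;> simp <;> omega
  · rw [List.perm_iff_count]
    intro p
    rw [qWord_count]

lemma exists_descent {t n : ℕ} (w : List (Fin t × Fin n)) (hw : ¬ w.Pairwise qLe) :
    ∃ u v b a, w = u ++ b :: a :: v ∧ ¬ qLe b a := by
  have htr : IsTrans (Fin t × Fin n) qLe := ⟨by
    rintro ⟨a, b⟩ ⟨c, d⟩ ⟨e, f⟩ h1 h2
    simp only [qLe] at h1 h2 ⊢
    omega⟩
  rw [← List.isChain_iff_pairwise] at hw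
  induction w with
  | nil => simp at hw
  | cons x w ih =>
    cases w with
    | nil => simp at hw
    | cons y w =>
      rw [List.isChain_cons_cons] at hw
      by_cases hxy : qLe x y
      · obtain ⟨u, v, b, a, h, h'⟩ := ih (fun h => hw ⟨hxy, h⟩)
        exact ⟨x :: u, v, b, a, by rw [h]; rfl, h'⟩
      · exact ⟨[], w, x, y, rfl, hxy⟩

/-! ### Straightening -/

/-- The defining relations of quantum `t × n` matrices, for a family `Z` in an algebra. -/
structure QRel {K P : Type*} [Field K] [Ring P] [Algebra K P] {t n : ℕ} (q : Kˣ)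
    (Z : Fin t → Fin n → P) : Prop where
  row : ∀ (i : Fin t) (j m : Fin n), j < m → Z i j * Z i m = (q : K) • (Z i m * Z i j)
  col : ∀ (i l : Fin t) (j : Fin n), i < l → Z i j * Z l j = (q : K) • (Z l j * Z i j)
  anti : ∀ (i l : Fin t) (j m : Fin n), i < l → j < m → Z i m * Z l j = Z l j * Z i m
  serre : ∀ (i l : Fin t) (j m : Fin n), i < l → j < m →
    Z i j * Z l m - Z l m * Z i j = ((q : K) - ((q⁻¹ : Kˣ) : K)) • (Z i m * Z l j)

/-- One straightening step: a descent `b a` is a combination of two words of length two which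
start with a letter before `b` and have the same total position. -/
lemma QRel.descent {K P : Type*} [Field K] [Ring P] [Algebra K P] {t n : ℕ} {q : Kˣ}
    {Z : Fin t → Fin n → P} (hZ : QRel q Z) {a b : Fin t × Fin n} (h : ¬ qLe b a) :
    ∃ (x y : K) (c d : Fin t × Fin n), qEnc a < qEnc b ∧ qEnc c < qEnc b ∧
      qEnc a + qEnc b = qEnc c + qEnc d ∧
      Z b.1 b.2 * Z a.1 a.2 =
        x • (Z a.1 a.2 * Z b.1 b.2) + y • (Z c.1 c.2 * Z d.1 d.2) := by
  obtain ⟨i, j⟩ := a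
  obtain ⟨l, m⟩ := b
  simp only [qLe, not_or, not_and, not_lt, not_le] at h
  rcases h.1.lt_or_eq with hil | rfl
  · have he : qEnc (i, j) < qEnc (l, m) := qEnc_lt hil
    rcases lt_trichotomy j m with hjm | rfl | hjm
    · refine ⟨1, -((q : K) - ((q⁻¹ : Kˣ) : K)), (i, m), (l, j), he, qEnc_lt hil, ?_, ?_⟩
      · simp only [qEnc]; omega
      · rw [neg_smul, ← hZ.serre i l j m hil hjm, one_smul]; abel
    · refine ⟨((q⁻¹ : Kˣ) : K), 0, (i, j), (l, j), he, he, rfl, ?_⟩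
      simp [hZ.col i l j hil, smul_smul]
    · refine ⟨1, 0, (i, j), (l, m), he, he, rfl, ?_⟩
      simp [hZ.anti i l m j hil hjm]
  · have hjm : j < m := h.2 rfl
    have he : qEnc (i, j) < qEnc (i, m) := by simpa [qEnc] using hjm
    refine ⟨((q⁻¹ : Kˣ) : K), 0, (i, j), (i, m), he, he, rfl, ?_⟩
    simp [hZ.row i j m hjm, smul_smul]

/-- Every word is a combination of ordered monomials, by induction on `qMeas`. -/
lemma QRel.straighten {K P : Type*} [Field K] [Ring P] [Algebra K P] {t n : ℕ} {q : Kˣ}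
    {Z : Fin t → Fin n → P} (hZ : QRel q Z) (w : List (Fin t × Fin n)) :
    (w.map fun p => Z p.1 p.2).prod ∈ Submodule.span K (Set.range (qMatMonomial Z)) := by
  induction hk : qMeas w using Nat.strong_induction_on generalizing w with
  | _ k ih =>
    subst hk
    by_cases hw : w.Pairwise qLe
    · rw [sorted_prod Z w hw]
      exact Submodule.subset_span ⟨_, rfl⟩
    · obtain ⟨u, v, b, a, rfl, hba⟩ := exists_descent w hw
      obtain ⟨x, y, c, d, h1, h2, h3, h4⟩ := hZ.descent hba
      have ha := ih _ (qMeas_lt u v h1 rfl) _ rfl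
      have hc := ih _ (qMeas_lt u v h2 h3) _ rfl
      have key : ((u ++ b :: a :: v).map fun p => Z p.1 p.2).prod =
          x • ((u ++ a :: b :: v).map fun p => Z p.1 p.2).prod +
          y • ((u ++ c :: d :: v).map fun p => Z p.1 p.2).prod := by
        simp only [List.map_append, List.map_cons, List.prod_append, List.prod_cons]
        rw [← mul_assoc (Z b.1 b.2), h4, ← mul_assoc (Z a.1 a.2), ← mul_assoc (Z c.1 c.2)]
        simp only [add_mul, mul_add, smul_mul_assoc, mul_smul_comm]
      rw [key]
      exact add_mem (Submodule.smul_mem _ _ ha) (Submodule.smul_mem _ _ hc)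

lemma QRel.adjoin_le {K P : Type*} [Field K] [Ring P] [Algebra K P] {t n : ℕ} {q : Kˣ}
    {Z : Fin t → Fin n → P} (hZ : QRel q Z) {z : P}
    (hz : z ∈ Algebra.adjoin K (Set.range fun p : Fin t × Fin n => Z p.1 p.2)) :
    z ∈ Submodule.span K (Set.range (qMatMonomial Z)) := by
  rw [← Subalgebra.mem_toSubmodule, Algebra.adjoin_eq_span] at hz
  refine Submodule.span_le.2 ?_ hz
  intro s hs
  obtain ⟨l, hl, rfl⟩ := Submonoid.exists_list_of_mem_closure hs
  have : ∃ w : List (Fin t × Fin n), (w.map fun p => Z p.1 p.2) = l := by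
    have := (Set.range_list_map (fun p : Fin t × Fin n => Z p.1 p.2))
    have hm : l ∈ {l : List P | ∀ x ∈ l, x ∈ Set.range fun p : Fin t × Fin n => Z p.1 p.2} := hl
    rw [← this] at hm
    exact hm
  obtain ⟨w, rfl⟩ := this
  exact hZ.straighten w

/-! ### Characters -/

lemma map_qMatMonomial {K P Q : Type*} [Field K] [Ring P] [Algebra K P] [Ring Q] [Algebra K Q]
    {t n : ℕ} (f : P →ₐ[K] Q) (Z : Fin t → Fin n → P) (m : Fin t × Fin n → ℕ) :
    f (qMatMonomial Z m) = qMatMonomial (fun i j => f (Z i j)) m := by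
  simp [qMatMonomial, map_list_prod, Function.comp_def]

/-- The universal property that the basis of ordered monomials forces: every family `y` obeying
the relations is the image of `X` under an algebra map. Its graph is the subalgebra of `R × B`
generated by the pairs `(X i j, y i j)`. -/
lemma QRel.exists_algHom {K R B : Type*} [Field K] [Ring R] [Algebra K R] [Ring B] [Algebra K B]
    {t n : ℕ} {q : Kˣ} {X : Fin t → Fin n → R} (hX : QRel q X)
    (hli : LinearIndependent K (qMatMonomial X))
    (hsp : Submodule.span K (Set.range (qMatMonomial X)) = ⊤)
    {y : Fin t → Fin n → B} (hy : QRel q y) :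
    ∃ χ : R →ₐ[K] B, ∀ i j, χ (X i j) = y i j := by
  set Z : Fin t → Fin n → R × B := fun i j => (X i j, y i j) with hZdef
  have hZ : QRel q Z :=
    { row := fun i j m h => Prod.ext (hX.row i j m h) (hy.row i j m h)
      col := fun i l j h => Prod.ext (hX.col i l j h) (hy.col i l j h)
      anti := fun i l j m h h' => Prod.ext (hX.anti i l j m h h') (hy.anti i l j m h h')
      serre := fun i l j m h h' => Prod.ext (hX.serre i l j m h h') (hy.serre i l j m h h') }
  set S := Algebra.adjoin K (Set.range fun p : Fin t × Fin n => Z p.1 p.2) with hS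
  have hmem : ∀ i j, Z i j ∈ S := fun i j => Algebra.subset_adjoin ⟨(i, j), rfl⟩
  let π : S →ₐ[K] R := (AlgHom.fst K R B).comp S.val
  have hfst : ∀ m, (AlgHom.fst K R B) (qMatMonomial Z m) = qMatMonomial X m := fun m => by
    rw [map_qMatMonomial]; rfl
  have hinj : Function.Injective π := by
    rw [injective_iff_map_eq_zero]
    rintro ⟨z, hz⟩ h0
    replace h0 : (AlgHom.fst K R B) z = 0 := h0
    obtain ⟨c, rfl⟩ := (Finsupp.mem_span_range_iff_exists_finsupp).1 (hZ.adjoin_le hz)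
    have hc : c = 0 := by
      refine linearIndependent_iff.1 hli c ?_
      simpa [Finsupp.linearCombination_apply, Finsupp.sum, map_sum, hfst] using h0
    subst hc
    refine Subtype.ext ?_
    simp [Finsupp.sum]
  have hsurj : Function.Surjective π := by
    rw [← AlgHom.coe_toLinearMap, ← LinearMap.range_eq_top, eq_top_iff, ← hsp, Submodule.span_le]
    rintro _ ⟨m, rfl⟩
    refine ⟨⟨qMatMonomial Z m, ?_⟩, hfst m⟩
    refine Subalgebra.list_prod_mem _ fun x hx => ?_
    obtain ⟨i, _, rfl⟩ := List.mem_map.1 hx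
    refine Subalgebra.list_prod_mem _ fun x hx => ?_
    obtain ⟨j, _, rfl⟩ := List.mem_map.1 hx
    exact pow_mem (hmem i j) _
  let e := AlgEquiv.ofBijective π ⟨hinj, hsurj⟩
  refine ⟨((AlgHom.snd K R B).comp S.val).comp e.symm.toAlgHom, fun i j => ?_⟩
  have : e.symm (X i j) = ⟨Z i j, hmem i j⟩ := by
    rw [AlgEquiv.symm_apply_eq]; rfl
  change (AlgHom.snd K R B) (S.val (e.symm (X i j))) = y i j
  rw [this]
  rfl

/-- The indicator of two positions that coincide or lie strictly south-east of each other obeys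
the quantum matrix relations, so it is a character of `R`; characters factor through the
abelianization. -/
lemma QRel.exists_character {K R : Type*} [Field K] [Ring R] [Algebra K R]
    {t n : ℕ} {q : Kˣ} {X : Fin t → Fin n → R} (hX : QRel q X)
    (hli : LinearIndependent K (qMatMonomial X))
    (hsp : Submodule.span K (Set.range (qMatMonomial X)) = ⊤)
    (a b : Fin t × Fin n) (hab : a = b ∨ (a.1 < b.1 ∧ a.2 < b.2)) :
    ∃ χ : RingQuot (commRel R) →ₐ[K] K, ∀ i j,
      χ (RingQuot.mkAlgHom K (commRel R) (X i j)) =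
        if (i, j) = a ∨ (i, j) = b then 1 else 0 := by
  let y : Fin t → Fin n → K := fun i j => if (i, j) = a ∨ (i, j) = b then 1 else 0
  have hz : ∀ i j l m, ((i = l ∧ j ≠ m) ∨ (i ≠ l ∧ j = m) ∨ (i < l ∧ m < j)) →
      y i j * y l m = 0 := by
    intro i j l m h
    obtain ⟨a1, a2⟩ := a
    obtain ⟨b1, b2⟩ := b
    simp only [y, Prod.mk.injEq, mul_ite, mul_one, mul_zero] at hab ⊢
    split_ifs <;> first | rfl | (exfalso; omega)
  have hy : QRel q y :=
    { row := fun i j m h => by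
        rw [hz i j i m (by omega), hz i m i j (by omega), smul_zero]
      col := fun i l j h => by
        rw [hz i j l j (by omega), hz l j i j (by omega), smul_zero]
      anti := fun i l j m h h' => mul_comm _ _
      serre := fun i l j m h h' => by
        rw [hz i m l j (by omega), smul_zero, mul_comm, sub_self] }
  obtain ⟨χ, hχ⟩ := hX.exists_algHom hli hsp hy
  refine ⟨RingQuot.liftAlgHom K ⟨χ, ?_⟩, fun i j => ?_⟩
  · rintro _ _ ⟨u, v, rfl, rfl⟩
    rw [map_mul, map_mul, mul_comm]
  · rw [RingQuot.liftAlgHom_mkAlgHom_apply, hχ]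

/-! ### The degree-two component -/

/-- In the abelianization `R̄ = R/[R,R]` of `R = O_q(M_{t,n}(K))`
(`t, n ≥ 2`, `q` not a root of unity): (1) `X̄_{ij} X̄_{lm} = 0` whenever
(`i = l`, `j ≠ m`), or (`i ≠ l`, `j = m`), or (`i < l`, `j > m`); and (2) the squares
`X̄_{ij}²` together with the products `X̄_{ij} X̄_{lm}` for `i < l`, `j < m` form a
`K`-basis of the degree-2 component of `R̄`. -/
theorem quantum_matrices_abelianization_degree_two {K R : Type*} [Field K] [Ring R]
    [Algebra K R] {t n : ℕ} (ht : 2 ≤ t) (hn : 2 ≤ n)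
    (q : Kˣ) (hq : ∀ k : ℕ, 0 < k → q ^ k ≠ 1)
    (X : Fin t → Fin n → R)
    (hrow : ∀ (i : Fin t) (j m : Fin n), j < m →
      X i j * X i m = (q : K) • (X i m * X i j))
    (hcol : ∀ (i l : Fin t) (j : Fin n), i < l →
      X i j * X l j = (q : K) • (X l j * X i j))
    (hanti : ∀ (i l : Fin t) (j m : Fin n), i < l → j < m →
      X i m * X l j = X l j * X i m)
    (hserre : ∀ (i l : Fin t) (j m : Fin n), i < l → j < m →
      X i j * X l m - X l m * X i j = ((q : K) - ((q⁻¹ : Kˣ) : K)) • (X i m * X l j))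
    (hPBW : LinearIndependent K (qMatMonomial X) ∧
      Submodule.span K (Set.range (qMatMonomial X)) = ⊤) :
    (∀ (i l : Fin t) (j m : Fin n),
      ((i = l ∧ j ≠ m) ∨ (i ≠ l ∧ j = m) ∨ (i < l ∧ m < j)) →
      RingQuot.mkAlgHom K (commRel R) (X i j) *
        RingQuot.mkAlgHom K (commRel R) (X l m) = 0) ∧
    (LinearIndependent K
        (fun s : (Fin t × Fin n) ⊕
            {pq : (Fin t × Fin n) × (Fin t × Fin n) //
              pq.1.1 < pq.2.1 ∧ pq.1.2 < pq.2.2} =>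
          Sum.elim
            (fun p => RingQuot.mkAlgHom K (commRel R) (X p.1 p.2) *
              RingQuot.mkAlgHom K (commRel R) (X p.1 p.2))
            (fun pq => RingQuot.mkAlgHom K (commRel R) (X pq.1.1.1 pq.1.1.2) *
              RingQuot.mkAlgHom K (commRel R) (X pq.1.2.1 pq.1.2.2)) s) ∧
      Submodule.span K
          (Set.range
            (fun s : (Fin t × Fin n) ⊕
                {pq : (Fin t × Fin n) × (Fin t × Fin n) //
                  pq.1.1 < pq.2.1 ∧ pq.1.2 < pq.2.2} =>
              Sum.elim
                (fun p => RingQuot.mkAlgHom K (commRel R) (X p.1 p.2) *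
                  RingQuot.mkAlgHom K (commRel R) (X p.1 p.2))
                (fun pq => RingQuot.mkAlgHom K (commRel R) (X pq.1.1.1 pq.1.1.2) *
                  RingQuot.mkAlgHom K (commRel R) (X pq.1.2.1 pq.1.2.2)) s)) =
        Submodule.map (RingQuot.mkAlgHom K (commRel R)).toLinearMap
          (Submodule.span K
            {r : R | ∃ (i l : Fin t) (j m : Fin n), r = X i j * X l m})) := by
  have hX : QRel q X := ⟨hrow, hcol, hanti, hserre⟩
  obtain ⟨hli, hsp⟩ := hPBW
  set φ := RingQuot.mkAlgHom K (commRel R) with hφ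
  have hcomm : ∀ a b : R, φ a * φ b = φ b * φ a := by
    intro a b
    rw [← map_mul, ← map_mul]
    exact RingQuot.mkAlgHom_rel K ⟨a, b, rfl, rfl⟩
  have hq1 : (q : K) ≠ 1 := by
    intro h
    exact hq 1 one_pos (by rw [pow_one]; exact Units.ext h)
  have hq2 : (q : K) - ((q⁻¹ : Kˣ) : K) ≠ 0 := by
    intro h
    refine hq 2 two_pos ?_
    rw [pow_two]
    nth_rewrite 2 [Units.ext (sub_eq_zero.1 h)]
    exact mul_inv_cancel q
  have hkill : ∀ a b : R, a * b = (q : K) • (b * a) → φ a * φ b = 0 := by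
    intro a b h
    have h1 : φ a * φ b = (q : K) • (φ a * φ b) := by
      simpa only [map_mul, map_smul, hcomm b a] using congrArg φ h
    have h2 : ((q : K) - 1) • (φ a * φ b) = 0 := by
      rw [sub_smul, one_smul, ← h1, sub_self]
    exact (smul_eq_zero.1 h2).resolve_left (sub_ne_zero.2 hq1)
  have part1 : ∀ (i l : Fin t) (j m : Fin n),
      ((i = l ∧ j ≠ m) ∨ (i ≠ l ∧ j = m) ∨ (i < l ∧ m < j)) →
      φ (X i j) * φ (X l m) = 0 := by
    rintro i l j m (⟨rfl, h⟩ | ⟨h, rfl⟩ | ⟨h, h'⟩)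
    · rcases lt_or_gt_of_ne h with h | h
      · exact hkill _ _ (hrow i j m h)
      · rw [hcomm]; exact hkill _ _ (hrow i m j h)
    · rcases lt_or_gt_of_ne h with h | h
      · exact hkill _ _ (hcol i l j h)
      · rw [hcomm]; exact hkill _ _ (hcol l i j h)
    · have h1 := congrArg φ (hserre i l m j h h')
      rw [map_sub, map_mul, map_mul, hcomm, sub_self, map_smul, map_mul] at h1
      exact (smul_eq_zero.1 h1.symm).resolve_left hq2
  refine ⟨part1, ?_, ?_⟩
  · rw [linearIndependent_iff']
    intro s g hg
    -- extending the coefficients by zero turns the relation into a sum over all indices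
    obtain ⟨c, hcg, hc⟩ : ∃ c : (Fin t × Fin n) ⊕ {pq : (Fin t × Fin n) × (Fin t × Fin n) //
        pq.1.1 < pq.2.1 ∧ pq.1.2 < pq.2.2} → K, (∀ x ∈ s, c x = g x) ∧ ∑ x, c x •
          Sum.elim (fun p => φ (X p.1 p.2) * φ (X p.1 p.2))
            (fun pq => φ (X pq.1.1.1 pq.1.1.2) * φ (X pq.1.2.1 pq.1.2.2)) x = 0 := by
      refine ⟨fun x => if x ∈ s then g x else 0, fun x hx => if_pos hx, ?_⟩
      rw [← hg]
      simp only [ite_smul, zero_smul, Finset.sum_ite_mem, Finset.univ_inter]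
    have hev : ∀ a b : Fin t × Fin n, (a = b ∨ (a.1 < b.1 ∧ a.2 < b.2)) →
        (∑ p, if p = a ∨ p = b then c (Sum.inl p) else 0) +
        (∑ pq : {pq : (Fin t × Fin n) × (Fin t × Fin n) //
          pq.1.1 < pq.2.1 ∧ pq.1.2 < pq.2.2},
          if pq.1 = (a, b) then c (Sum.inr pq) else 0) = 0 := by
      intro a b hab
      obtain ⟨χ, hχ⟩ := hX.exists_character hli hsp a b hab
      have h := congrArg χ hc
      rw [map_zero, map_sum, Fintype.sum_sum_type] at h
      refine Eq.trans ?_ h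
      clear h
      congr 1
      · refine Finset.sum_congr rfl fun p _ => ?_
        simp [hφ, hχ]
        tauto
      · refine Finset.sum_congr rfl fun pq _ => ?_
        obtain ⟨⟨⟨i, j⟩, ⟨l, m⟩⟩, h1, h2⟩ := pq
        obtain ⟨a1, a2⟩ := a
        obtain ⟨b1, b2⟩ := b
        simp only [Sum.elim_inr, map_smul, map_mul, hφ, hχ, smul_eq_mul, Prod.mk.injEq] at hab h1 h2 ⊢
        split_ifs <;> first | (exfalso; omega) | simp
    -- the character at a single position isolates the coefficient of a square
    have hl : ∀ p, c (Sum.inl p) = 0 := by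
      intro p
      have h := hev p p (Or.inl rfl)
      rw [Finset.sum_eq_zero (s := (Finset.univ : Finset {pq : (Fin t × Fin n) ×
        (Fin t × Fin n) // pq.1.1 < pq.2.1 ∧ pq.1.2 < pq.2.2}))] at h
      · simpa using h
      · rintro ⟨pq, h1, h2⟩ _
        rw [if_neg]
        rintro rfl
        exact lt_irrefl _ h1
    have hr : ∀ pq, c (Sum.inr pq) = 0 := by
      intro pq
      have h := hev pq.1.1 pq.1.2 (Or.inr pq.2)
      simpa [hl, ← Subtype.ext_iff] using h
    intro x hx
    rw [← hcg x hx]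
    cases x with
    | inl p => exact hl p
    | inr p => exact hr p
  · rw [Submodule.map_span]
    apply le_antisymm
    · rw [Submodule.span_le]
      rintro _ ⟨p | pq, rfl⟩
      · exact Submodule.subset_span ⟨_, ⟨p.1, p.1, p.2, p.2, rfl⟩, map_mul φ _ _⟩
      · exact Submodule.subset_span ⟨_, ⟨_, _, _, _, rfl⟩, map_mul φ _ _⟩
    · rw [Submodule.span_le]
      rintro _ ⟨_, ⟨i, l, j, m, rfl⟩, rfl⟩
      rw [AlgHom.toLinearMap_apply, map_mul]
      by_cases h0 : (i = l ∧ j ≠ m) ∨ (i ≠ l ∧ j = m) ∨ (i < l ∧ m < j)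
      · rw [part1 i l j m h0]; exact zero_mem _
      by_cases h1 : l < i ∧ j < m
      · rw [hcomm, part1 l i m j (Or.inr (Or.inr h1))]; exact zero_mem _
      by_cases h2 : i < l ∧ j < m
      · exact Submodule.subset_span ⟨Sum.inr ⟨((i, j), (l, m)), h2⟩, rfl⟩
      by_cases h3 : l < i ∧ m < j
      · rw [hcomm]
        exact Submodule.subset_span ⟨Sum.inr ⟨((l, m), (i, j)), h3⟩, rfl⟩
      obtain ⟨rfl, rfl⟩ : i = l ∧ j = m := by omega
      exact Submodule.subset_span ⟨Sum.inl (i, j), rfl⟩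
end
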